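/- Flat Normal Form: every satisfiable Horn NAT T without fixed letters is logically equivalent to a Horn NAT of the form {Z : ψ} without fixed letters (with Z = At∖Ab), where ψ is a single Horn CNF; i.e., nesting can be completely eliminated from Horn NATs without fixed letters. -/

import Mathlib

/-!
STATEMENT 10 (Flat Normal Form): every satisfiable Horn NAT without fixed letters is
logically equivalent to a Horn NAT `{Z : ψ}` without fixed letters, with `ψ` a single Horn CNF.
-/

namespace NestedCirc

universe u
variable {α : Type u}

/-- Propositional formulas over atoms `α`. -/
inductive PForm (α : Type u) : Type u where
  | tru : PForm α
  | fls : PForm α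
  | atom : α → PForm α
  | neg : PForm α → PForm α
  | conj : PForm α → PForm α → PForm α
  | disj : PForm α → PForm α → PForm α

namespace PForm

/-- Satisfaction of a propositional formula in an interpretation (set of true atoms). -/
def sat : PForm α → Set α → Prop
  | tru, _ => True
  | fls, _ => False
  | atom a, M => a ∈ M
  | neg φ, M => ¬ φ.sat M
  | conj φ ψ, M => φ.sat M ∧ ψ.sat M
  | disj φ ψ, M => φ.sat M ∨ ψ.sat M

/-- Implication `φ → ψ`. -/
def imp (φ ψ : PForm α) : PForm α := disj (neg φ) ψ

/-- Equivalence `φ ↔ ψ`. -/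
def iffF (φ ψ : PForm α) : PForm α := conj (imp φ ψ) (imp ψ φ)

/-- The atoms occurring in a formula. -/
def atoms : PForm α → Set α
  | tru => ∅
  | fls => ∅
  | atom a => {a}
  | neg φ => φ.atoms
  | conj φ ψ => φ.atoms ∪ ψ.atoms
  | disj φ ψ => φ.atoms ∪ ψ.atoms

/-- Conjunction of a list of formulas. -/
def conjList (l : List (PForm α)) : PForm α := l.foldr conj tru

end PForm

/-- `M ≤_{P;Z} M'` : `M` agrees with `M'` on the fixed atoms `(P ∪ Z)ᶜ`
and is smaller or equal on the minimized atoms `P`. -/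
def lePZ (P Z M M' : Set α) : Prop :=
  M ∩ P ⊆ M' ∩ P ∧ M ∩ (P ∪ Z)ᶜ = M' ∩ (P ∪ Z)ᶜ

/-- `M <_{P;Z} M'` (strict preference). -/
def ltPZ (P Z M M' : Set α) : Prop := lePZ P Z M M' ∧ ¬ lePZ P Z M' M

/-- A block `{C : B₁,…,Bₘ}` of a nested abnormality theory: the described atoms `C`,
the members that are propositional formulas, and the members that are blocks. -/
inductive Block (α : Type u) : Type u where
  | mk : Set α → List (PForm α) → List (Block α) → Block α

/-- Satisfaction of a block: `M ⊨ {C : B₁,…,Bₘ}` iff some interpretation `M*` agreeing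
with `M` outside `Ab` satisfies every member and is `(Ab;C)`-minimal doing so. -/
def Block.sat (Ab : Set α) : Block α → Set α → Prop
  | .mk C fs bs, M =>
      ∃ Ms : Set α, Ms ∩ Abᶜ = M ∩ Abᶜ ∧
        ((∀ f ∈ fs, f.sat Ms) ∧ ∀ b ∈ bs, Block.sat Ab b Ms) ∧
        ∀ N : Set α, ((∀ f ∈ fs, f.sat N) ∧ ∀ b ∈ bs, Block.sat Ab b N) → ¬ ltPZ Ab C N Ms

/-- A nested abnormality theory (NAT): a finite collection of blocks. -/
abbrev NAT (α : Type u) := List (Block α)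

/-- `M ⊨ T` iff `M` satisfies every block of `T`. -/
def NAT.sat (Ab : Set α) (T : NAT α) (M : Set α) : Prop := ∀ B ∈ T, Block.sat Ab B M

/-- `φ` is a clause: a disjunction of literals (with `fls` for the empty clause). -/
def PForm.IsClause : PForm α → Prop
  | .fls => True
  | .atom _ => True
  | .neg (.atom _) => True
  | .disj φ ψ => φ.IsClause ∧ ψ.IsClause
  | _ => False

/-- The number of positive literals of a clause. -/
def PForm.posCount : PForm α → ℕ
  | .atom _ => 1
  | .disj φ ψ => φ.posCount + ψ.posCount
  | _ => 0

/-- A Horn clause: a clause with at most one positive literal. -/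
def PForm.IsHornClause (φ : PForm α) : Prop := φ.IsClause ∧ φ.posCount ≤ 1

/-- A Horn CNF: a conjunction of Horn clauses. -/
def PForm.IsHornCNF : PForm α → Prop
  | .tru => True
  | .conj φ ψ => φ.IsHornCNF ∧ ψ.IsHornCNF
  | φ => φ.IsHornClause

/-- A Horn block: every propositional member is a Horn CNF and every block member is
recursively Horn. -/
inductive Block.IsHorn : Block α → Prop where
  | mk {C : Set α} {fs : List (PForm α)} {bs : List (Block α)} :
      (∀ f ∈ fs, f.IsHornCNF) → (∀ b ∈ bs, b.IsHorn) → Block.IsHorn (.mk C fs bs)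

/-- A block (recursively) without fixed letters: the described atoms of every block
occurring in it are all of `At ∖ Ab`. -/
inductive Block.NoFixed (Ab : Set α) : Block α → Prop where
  | mk {C : Set α} {fs : List (PForm α)} {bs : List (Block α)} :
      C = Abᶜ → (∀ b ∈ bs, b.NoFixed Ab) → Block.NoFixed Ab (.mk C fs bs)

theorem clause_anti {c : PForm α} (hc : c.IsClause) (h0 : c.posCount = 0) {L M : Set α}
    (hLM : L ⊆ M) (h : c.sat M) : c.sat L := by
  induction c with
  | tru => trivial
  | fls => exact h
  | atom a => simp [PForm.posCount] at h0
  | neg φ _ =>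
    cases φ with
    | atom a => exact fun h' => h (hLM h')
    | _ => simp [PForm.IsClause] at hc
  | conj φ ψ _ _ => simp [PForm.IsClause] at hc
  | disj φ ψ h1 h2 =>
    simp only [PForm.IsClause, PForm.posCount] at hc h0
    rcases h with h | h
    · exact Or.inl (h1 hc.1 (by omega) h)
    · exact Or.inr (h2 hc.2 (by omega) h)

theorem clause_inter {c : PForm α} (hc : c.IsClause) (h0 : c.posCount ≤ 1) {S : Set (Set α)}
    (hS : S.Nonempty) (h : ∀ M ∈ S, c.sat M) : c.sat (⋂₀ S) := by
  induction c with
  | tru => trivial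
  | fls => obtain ⟨M, hM⟩ := hS; exact h M hM
  | atom a => exact fun M hM => h M hM
  | neg φ _ =>
    obtain ⟨M, hM⟩ := hS
    exact clause_anti hc rfl (Set.sInter_subset_of_mem hM) (h M hM)
  | conj φ ψ _ _ => simp [PForm.IsClause] at hc
  | disj φ ψ h1 h2 =>
    simp only [PForm.IsClause, PForm.posCount] at hc h0
    by_cases hp : φ.posCount = 0
    · by_cases hx : ∀ M ∈ S, ψ.sat M
      · exact Or.inr (h2 hc.2 (by omega) hx)
      · push Not at hx
        obtain ⟨M, hM, hn⟩ := hx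
        exact Or.inl (clause_anti hc.1 hp (Set.sInter_subset_of_mem hM)
          ((h M hM).resolve_right hn))
    · by_cases hx : ∀ M ∈ S, φ.sat M
      · exact Or.inl (h1 hc.1 (by omega) hx)
      · push Not at hx
        obtain ⟨M, hM, hn⟩ := hx
        exact Or.inr (clause_anti hc.2 (by omega) (Set.sInter_subset_of_mem hM)
          ((h M hM).resolve_left hn))

theorem cnf_inter {c : PForm α} (hc : c.IsHornCNF) {S : Set (Set α)}
    (hS : S.Nonempty) (h : ∀ M ∈ S, c.sat M) : c.sat (⋂₀ S) := by
  induction c with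
  | tru => trivial
  | conj φ ψ h1 h2 =>
    exact ⟨h1 hc.1 (fun M hM => (h M hM).1), h2 hc.2 (fun M hM => (h M hM).2)⟩
  | _ => exact clause_inter hc.1 hc.2 hS h

theorem clause_subst (Ab L : Set α) {c : PForm α} (hc : c.IsClause) :
    ∃ d : PForm α, (d = .tru ∨ (d.IsClause ∧ d.posCount ≤ c.posCount)) ∧
      ∀ M, d.sat M ↔ c.sat ((M ∩ Abᶜ) ∪ (L ∩ Ab)) := by
  induction c with
  | tru => exact ⟨.tru, Or.inl rfl, fun M => Iff.rfl⟩
  | fls => exact ⟨.fls, Or.inr ⟨trivial, le_rfl⟩, fun M => Iff.rfl⟩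
  | atom a =>
    by_cases ha : a ∈ Ab
    · by_cases hL : a ∈ L
      · exact ⟨.tru, Or.inl rfl, fun M => by simp [PForm.sat, ha, hL]⟩
      · exact ⟨.fls, Or.inr ⟨trivial, Nat.zero_le _⟩, fun M => by simp [PForm.sat, ha, hL]⟩
    · exact ⟨.atom a, Or.inr ⟨trivial, le_rfl⟩, fun M => by simp [PForm.sat, ha]⟩
  | neg φ _ =>
    cases φ with
    | atom a =>
      by_cases ha : a ∈ Ab
      · by_cases hL : a ∈ L
        · exact ⟨.fls, Or.inr ⟨trivial, Nat.zero_le _⟩, fun M => by simp [PForm.sat, ha, hL]⟩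
        · exact ⟨.tru, Or.inl rfl, fun M => by simp [PForm.sat, ha, hL]⟩
      · exact ⟨.neg (.atom a), Or.inr ⟨trivial, le_rfl⟩, fun M => by simp [PForm.sat, ha]⟩
    | _ => simp [PForm.IsClause] at hc
  | conj φ ψ _ _ => simp [PForm.IsClause] at hc
  | disj φ ψ h1 h2 =>
    simp only [PForm.IsClause] at hc
    obtain ⟨d1, hd1, e1⟩ := h1 hc.1
    obtain ⟨d2, hd2, e2⟩ := h2 hc.2
    rcases hd1 with rfl | hd1
    · exact ⟨.tru, Or.inl rfl, fun M => ⟨fun _ => Or.inl ((e1 M).1 trivial), fun _ => trivial⟩⟩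
    rcases hd2 with rfl | hd2
    · exact ⟨.tru, Or.inl rfl, fun M => ⟨fun _ => Or.inr ((e2 M).1 trivial), fun _ => trivial⟩⟩
    exact ⟨.disj d1 d2, Or.inr ⟨⟨hd1.1, hd2.1⟩, Nat.add_le_add hd1.2 hd2.2⟩,
      fun M => or_congr (e1 M) (e2 M)⟩

theorem clause_cnf {c : PForm α} (hc : c.IsHornClause) : c.IsHornCNF := by
  cases c with
  | tru => trivial
  | conj φ ψ => simp [PForm.IsHornClause, PForm.IsClause] at hc
  | _ => exact hc

theorem clause_subst_cnf (Ab L : Set α) {c : PForm α} (hc : c.IsHornClause) :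
    ∃ d : PForm α, d.IsHornCNF ∧ ∀ M, d.sat M ↔ c.sat ((M ∩ Abᶜ) ∪ (L ∩ Ab)) := by
  obtain ⟨d, hd, e⟩ := clause_subst Ab L hc.1
  refine ⟨d, ?_, e⟩
  rcases hd with rfl | hd
  · trivial
  · exact clause_cnf ⟨hd.1, hd.2.trans hc.2⟩

theorem cnf_subst (Ab L : Set α) {c : PForm α} (hc : c.IsHornCNF) :
    ∃ d : PForm α, d.IsHornCNF ∧ ∀ M, d.sat M ↔ c.sat ((M ∩ Abᶜ) ∪ (L ∩ Ab)) := by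
  induction c with
  | tru => exact ⟨.tru, trivial, fun M => Iff.rfl⟩
  | conj φ ψ h1 h2 =>
    obtain ⟨d1, hd1, e1⟩ := h1 hc.1
    obtain ⟨d2, hd2, e2⟩ := h2 hc.2
    exact ⟨.conj d1 d2, ⟨hd1, hd2⟩, fun M => and_congr (e1 M) (e2 M)⟩
  | _ => exact clause_subst_cnf Ab L hc

theorem list_cnf {β : Type*} (P : β → Set α → Prop) (l : List β)
    (h : ∀ b ∈ l, ∃ d : PForm α, d.IsHornCNF ∧ ∀ M, P b M ↔ d.sat M) :
    ∃ d : PForm α, d.IsHornCNF ∧ ∀ M, (∀ b ∈ l, P b M) ↔ d.sat M := by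
  induction l with
  | nil => exact ⟨.tru, trivial, fun M => by simp [PForm.sat]⟩
  | cons b l ih =>
    obtain ⟨d1, hd1, e1⟩ := h b (by simp)
    obtain ⟨d2, hd2, e2⟩ := ih (fun b hb => h b (by simp [hb]))
    exact ⟨.conj d1 d2, ⟨hd1, hd2⟩, fun M => by simp [PForm.sat, ← e1, ← e2]⟩

theorem block_cnf (Ab : Set α) {B : Block α} (hB : B.IsHorn) (hN : B.NoFixed Ab) :
    ∃ d : PForm α, d.IsHornCNF ∧ ∀ M, B.sat Ab M ↔ d.sat M := by
  induction hB with
  | @mk C fs bs hf _ ih =>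
    obtain ⟨hC, hNb⟩ := hN
    subst hC
    obtain ⟨d1, hd1, e1⟩ := list_cnf (fun f M => PForm.sat f M) fs
      (fun f hfm => ⟨f, hf f hfm, fun _ => Iff.rfl⟩)
    obtain ⟨d2, hd2, e2⟩ := list_cnf (fun b M => Block.sat Ab b M) bs
      (fun b hb => ih b hb (hNb b hb))
    have hd : (PForm.conj d1 d2).IsHornCNF := ⟨hd1, hd2⟩
    have e : ∀ M, ((∀ f ∈ fs, f.sat M) ∧ ∀ b ∈ bs, Block.sat Ab b M) ↔
        (PForm.conj d1 d2).sat M := fun M => and_congr (e1 M) (e2 M)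
    generalize PForm.conj d1 d2 = φ at hd e
    by_cases hs : ∃ M, φ.sat M
    · set L : Set α := ⋂₀ {M | φ.sat M} with hLdef
      have hL : φ.sat L := cnf_inter hd hs (fun M hM => hM)
      have hle : ∀ M, φ.sat M → L ⊆ M := fun M hM => Set.sInter_subset_of_mem hM
      obtain ⟨d, hd', e'⟩ := cnf_subst Ab L hd
      refine ⟨d, hd', fun M => ?_⟩
      rw [e', Block.sat]
      simp only [e]
      constructor
      · rintro ⟨Ms, h1, h2, h3⟩
        have h4 := h3 L hL
        have h5 : Ms ∩ Ab ⊆ L ∩ Ab := by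
          by_contra hc
          exact h4 ⟨⟨Set.inter_subset_inter_left _ (hle Ms h2), by simp⟩, fun h => hc h.1⟩
        have h6 : Ms ∩ Ab = L ∩ Ab :=
          h5.antisymm (Set.inter_subset_inter_left _ (hle Ms h2))
        rw [← h1, ← h6, Set.union_comm, Set.inter_union_compl]
        exact h2
      · intro h
        refine ⟨_, ?_, h, ?_⟩
        · ext x; simp only [Set.mem_inter_iff, Set.mem_union, Set.mem_compl_iff]; tauto
        · intro N hN hlt
          refine hlt.2 ⟨?_, by simp⟩
          rintro x ⟨hx | hx, hA⟩
          · exact absurd hA hx.2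
          · exact ⟨hle N hN hx.1, hA⟩
    · refine ⟨.fls, ⟨trivial, Nat.zero_le _⟩, fun M => ?_⟩
      rw [Block.sat]
      simp only [e]
      exact ⟨fun ⟨Ms, _, h, _⟩ => hs ⟨Ms, h⟩, fun h => h.elim⟩

theorem block_congr (Ab : Set α) (B : Block α) {M M' : Set α} (h : M ∩ Abᶜ = M' ∩ Abᶜ) :
    B.sat Ab M ↔ B.sat Ab M' := by
  cases B with
  | mk C fs bs => rw [Block.sat, Block.sat, h]

/-- **Flat Normal Form.** Every satisfiable Horn NAT `T` without fixed
letters is logically equivalent to a Horn NAT of the form `{Z : ψ}` without fixed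
letters (with `Z = At ∖ Ab`), where `ψ` is a single Horn CNF: nesting can be
completely eliminated from Horn NATs without fixed letters. -/
theorem horn_nat_flat_normal_form (Ab : Set α) (T : NAT α)
    (hHorn : ∀ B ∈ T, B.IsHorn) (hNoFixed : ∀ B ∈ T, B.NoFixed Ab)
    (hSat : ∃ M : Set α, NAT.sat Ab T M) :
    ∃ ψ : PForm α, ψ.IsHornCNF ∧
      ∀ M : Set α, NAT.sat Ab T M ↔ NAT.sat Ab [Block.mk Abᶜ [ψ] []] M := by
  obtain ⟨ψ, hψ, e⟩ := list_cnf (fun B M => Block.sat Ab B M) T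
    (fun B hB => block_cnf Ab (hHorn B hB) (hNoFixed B hB))
  have inv : ∀ M M' : Set α, M ∩ Abᶜ = M' ∩ Abᶜ → (ψ.sat M ↔ ψ.sat M') := fun M M' h => by
    rw [← e, ← e]
    exact forall₂_congr fun B _ => block_congr Ab B h
  refine ⟨ψ, hψ, fun M => (e M).trans ?_⟩
  simp only [NAT.sat, List.mem_singleton, forall_eq, Block.sat, List.not_mem_nil,
    false_imp_iff, implies_true, and_true]
  constructor
  · intro h
    have h1 : (M ∩ Abᶜ) ∩ Abᶜ = M ∩ Abᶜ := by simp [Set.inter_assoc]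
    refine ⟨M ∩ Abᶜ, h1, (inv _ _ h1).2 h, fun N _ hlt => hlt.2 ⟨?_, by simp⟩⟩
    rintro x ⟨hx, hA⟩
    exact absurd hA hx.2
  · rintro ⟨Ms, h1, h2, _⟩
    exact (inv _ _ h1).1 h2

end NestedCirc
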